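/- arXiv:math/0511474 — 2 statements merged into one kernel-verified Lean document; each statement's English description precedes it below -/
import Mathlib

section
/- The bar map, restricted to N_inf(p), is a bijection from N_inf(p) onto N_fin(p). -/
/-- `N_inf(p)` (letters encoded as pairs `(i, ε)` with `ε : Bool`, `true` = `+1`):
each pair of consecutive letters satisfies (a) `i_k < i_{k+1}`, or
(b) `i_k = i_{k+1}` and `ε_k = ε_{k+1}`, or (c) `0 < i_k − i_{k+1} < p` and
`ε_{k+1} = −1`. -/
def NInf (p : ℕ) (w : List (ℕ × Bool)) : Prop :=
  List.Chain' (fun a b : ℕ × Bool =>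
    a.1 < b.1 ∨ (a.1 = b.1 ∧ a.2 = b.2) ∨
    (b.1 < a.1 ∧ a.1 - b.1 < p ∧ b.2 = false)) w

/-- Cancel (exhaustively) all adjacent pairs `x_0^ε x_0^{−ε}` in a word. -/
def reduce0 : List (ℕ × Bool) → List (ℕ × Bool)
  | [] => []
  | a :: l =>
    match reduce0 l with
    | [] => [a]
    | b :: t => if a.1 = 0 ∧ b.1 = 0 ∧ a.2 = !b.2 then t else a :: b :: t

/-- Expansion of a letter: `x_j^ε` with `j = r + d(p−1)`, `1 ≤ r ≤ p−1`,
`d ≥ 0`, becomes `x_0^{−d} x_r^ε x_0^{d}`; the letter `x_0^{±1}` is unchanged. -/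
def letterExpand (p : ℕ) (a : ℕ × Bool) : List (ℕ × Bool) :=
  if a.1 = 0 then [a]
  else
    List.replicate ((a.1 - 1) / (p - 1)) ((0 : ℕ), false) ++
      [((a.1 - 1) % (p - 1) + 1, a.2)] ++
      List.replicate ((a.1 - 1) / (p - 1)) ((0 : ℕ), true)

/-- The bar map: expand every letter and freely cancel adjacent pairs
`x_0^ε x_0^{−ε}`. -/
def barMap (p : ℕ) (w : List (ℕ × Bool)) : List (ℕ × Bool) :=
  reduce0 ((w.map (letterExpand p)).flatten)

/-- The forbidden subwords (1)–(5). -/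
def Forbidden (p : ℕ) (u : List (ℕ × Bool)) : Prop :=
  (∃ (i : ℕ) (ε : Bool), i ≤ p - 1 ∧ u = [(i, ε), (i, !ε)]) ∨
  (∃ (α β k : ℕ) (ε : Bool), 1 ≤ β ∧ β < α ∧ α ≤ p - 1 ∧
    u = (α, ε) :: (List.replicate k ((0 : ℕ), true) ++ [(β, true)])) ∨
  (∃ (α β k : ℕ) (ε : Bool), 1 ≤ β ∧ β < α ∧ α ≤ p - 1 ∧
    u = (α, ε) :: (List.replicate (k + 1) ((0 : ℕ), true) ++ [(β, false)])) ∨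
  (∃ (α β k : ℕ) (ε : Bool), 1 ≤ α ∧ α ≤ β ∧ β ≤ p - 1 ∧
    u = (α, ε) :: (List.replicate (k + 1) ((0 : ℕ), true) ++ [(β, true)])) ∨
  (∃ (α β k : ℕ) (ε : Bool), 1 ≤ α ∧ α ≤ β ∧ β ≤ p - 1 ∧
    u = (α, ε) :: (List.replicate (k + 2) ((0 : ℕ), true) ++ [(β, false)]))

/-- `N_fin(p)`: words over `x_0^{±1}, …, x_{p−1}^{±1}` with no forbidden
subword. -/
def NFin (p : ℕ) (w : List (ℕ × Bool)) : Prop :=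
  (∀ a ∈ w, a.1 ≤ p - 1) ∧ ∀ u, u <:+: w → ¬ Forbidden p u

/-!
A word without `x_0^{±1} x_0^{∓1}` is uniquely `x_0^n` followed by syllables `x_j^ε x_0^e` with
`j ≥ 1`. In a word of `N_inf(p)` the exponents `e` are at most `0` (except possibly the initial
`n`), but the subscripts `j = r + d(p−1)`, `1 ≤ r ≤ p−1`, are unbounded. Once the powers of `x_0`
created by the bar map are collected, a syllable `x_{r+d(p−1)}^ε x_0^m` followed by one with shift
`d'` becomes `x_r^ε x_0^e` with `e = d + m − d'`. Moreover `d = 0` or `m = 0`, because a letter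
`x_0^{−1}` after `x_j` forces `j < p`; hence `d = max(e + d', 0)` and `m = min(e + d', 0)` are
recovered from right to left. Under this correspondence the conditions that the two normal forms
impose on consecutive syllables agree.
-/

/-- The one-letter reduction step: prepend `a` to a word, cancelling it against the first letter
when the two are `x_0^ε x_0^{−ε}`. -/
def consReduce (a : ℕ × Bool) : List (ℕ × Bool) → List (ℕ × Bool)
  | [] => [a]
  | b :: w => if a.1 = 0 ∧ b.1 = 0 ∧ a.2 = !b.2 then w else a :: b :: w

theorem reduce0_eq_foldr (w : List (ℕ × Bool)) : reduce0 w = w.foldr consReduce [] := by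
  induction w with
  | nil => rfl
  | cons a w ih => rw [List.foldr_cons, ← ih]; rfl

theorem consReduce_succ (j : ℕ) (ε : Bool) (w : List (ℕ × Bool)) :
    consReduce (j + 1, ε) w = (j + 1, ε) :: w := by
  cases w <;> simp [consReduce]

/-- The word `x_0^n`, for an integer exponent `n`. -/
def zeroPow : ℤ → List (ℕ × Bool)
  | .ofNat n => List.replicate n (0, true)
  | .negSucc n => List.replicate (n + 1) (0, false)

@[simp]
theorem zeroPow_zero : zeroPow 0 = [] := rfl

theorem zeroPow_natCast (n : ℕ) : zeroPow n = List.replicate n (0, true) := rfl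

theorem zeroPow_neg_natCast (n : ℕ) : zeroPow (-n) = List.replicate n (0, false) := by
  cases n <;> rfl

theorem zeroPow_eq_replicate (n : ℤ) : zeroPow n = List.replicate n.natAbs (0, decide (0 ≤ n)) := by
  cases n <;> simp [zeroPow]

theorem zeroPow_of_pos {n : ℤ} (hn : 0 < n) : zeroPow n = (0, true) :: zeroPow (n - 1) := by
  lift n to ℕ using hn.le
  obtain ⟨k, rfl⟩ := Nat.exists_eq_add_one.2 (Int.natCast_pos.1 hn)
  rw [Nat.cast_succ, add_sub_cancel_right]
  rfl

theorem zeroPow_of_neg {n : ℤ} (hn : n < 0) : zeroPow n = (0, false) :: zeroPow (n + 1) := by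
  obtain ⟨k, rfl⟩ := Int.eq_negSucc_of_lt_zero hn
  rw [show Int.negSucc k + 1 = -k by omega, zeroPow_neg_natCast]
  rfl

theorem zeroPow_injective : Function.Injective zeroPow := by
  intro m n h
  rw [zeroPow_eq_replicate, zeroPow_eq_replicate, List.replicate_inj, Prod.mk.injEq,
    decide_eq_decide] at h
  omega

theorem fst_eq_zero_of_mem_zeroPow {n : ℤ} {a : ℕ × Bool} (ha : a ∈ zeroPow n) : a.1 = 0 := by
  rw [zeroPow_eq_replicate] at ha
  rw [List.eq_of_mem_replicate ha]

theorem flatMap_letterExpand_zeroPow (p : ℕ) (n : ℤ) :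
    (zeroPow n).flatMap (letterExpand p) = zeroPow n := by
  simp [zeroPow_eq_replicate, List.flatMap_replicate, letterExpand]

theorem takeWhile_zeroPow_append_cons (n : ℤ) (j : ℕ) (ε : Bool) (w : List (ℕ × Bool)) :
    (zeroPow n ++ (j + 1, ε) :: w).takeWhile (fun a => a.1 = 0) = zeroPow n := by
  rw [List.takeWhile_append_of_pos fun a ha => by simpa using fst_eq_zero_of_mem_zeroPow ha]
  simp

theorem zeroPow_append_cons_inj {m n : ℤ} {j k : ℕ} {ε δ : Bool} {v w : List (ℕ × Bool)} :
    zeroPow m ++ (j + 1, ε) :: v = zeroPow n ++ (k + 1, δ) :: w ↔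
      m = n ∧ j = k ∧ ε = δ ∧ v = w := by
  refine ⟨fun h => ?_, by rintro ⟨rfl, rfl, rfl, rfl⟩; rfl⟩
  obtain rfl : m = n := zeroPow_injective <| by
    rw [← takeWhile_zeroPow_append_cons m j ε v, h, takeWhile_zeroPow_append_cons]
  simpa [and_assoc] using h

/-- A syllable `x_{index+1}^{sign} x_0^{exp}`. The shift of the index keeps the leading letter
different from `x_0`. -/
@[ext]
structure Syllable where
  /-- One less than the subscript of the leading letter. -/
  index : ℕ
  /-- The exponent of the leading letter, `true` standing for `+1`. -/
  sign : Bool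
  /-- The exponent of the power of `x_0` that follows. -/
  exp : ℤ

/-- The word `x_0^n` followed by the syllables of `L`. -/
def syllableWord (n : ℤ) : List Syllable → List (ℕ × Bool)
  | [] => zeroPow n
  | s :: L => zeroPow n ++ (s.index + 1, s.sign) :: syllableWord s.exp L

theorem syllableWord_of_pos {n : ℤ} (hn : 0 < n) (L : List Syllable) :
    syllableWord n L = (0, true) :: syllableWord (n - 1) L := by
  cases L <;> simp [syllableWord, zeroPow_of_pos hn]

theorem syllableWord_of_neg {n : ℤ} (hn : n < 0) (L : List Syllable) :
    syllableWord n L = (0, false) :: syllableWord (n + 1) L := by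
  cases L <;> simp [syllableWord, zeroPow_of_neg hn]

theorem syllableWord_zero_cons (s : Syllable) (L : List Syllable) :
    syllableWord 0 (s :: L) = (s.index + 1, s.sign) :: syllableWord s.exp L := rfl

theorem syllableWord_append_cons (n : ℤ) (L : List Syllable) (s : Syllable) (M : List Syllable) :
    syllableWord n (L ++ s :: M) = syllableWord n L ++ syllableWord 0 (s :: M) := by
  induction L generalizing n with
  | nil => rfl
  | cons t L ih => simp [syllableWord, ih]

theorem zeroPow_ne_syllableWord_cons (m n : ℤ) (s : Syllable) (L : List Syllable) :
    zeroPow m ≠ syllableWord n (s :: L) := by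
  intro h
  have hmem : (s.index + 1, s.sign) ∈ zeroPow m := by simp [h, syllableWord]
  exact Nat.succ_ne_zero _ (fst_eq_zero_of_mem_zeroPow hmem)

theorem syllableWord_inj {m n : ℤ} {L M : List Syllable} :
    syllableWord m L = syllableWord n M ↔ m = n ∧ L = M := by
  refine ⟨fun h => ?_, by rintro ⟨rfl, rfl⟩; rfl⟩
  induction L generalizing m n M with
  | nil =>
    cases M with
    | nil => exact ⟨zeroPow_injective h, rfl⟩
    | cons t M => exact absurd h (zeroPow_ne_syllableWord_cons m n t M)
  | cons s L ih =>
    cases M with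
    | nil => exact absurd h.symm (zeroPow_ne_syllableWord_cons n m s L)
    | cons t M =>
      obtain ⟨rfl, hindex, hsign, hrest⟩ := zeroPow_append_cons_inj.1 h
      obtain ⟨hexp, rfl⟩ := ih hrest
      exact ⟨rfl, by rw [Syllable.ext hindex hsign hexp]⟩

theorem consReduce_true_syllableWord (n : ℤ) (L : List Syllable) :
    consReduce (0, true) (syllableWord n L) = syllableWord (n + 1) L := by
  rcases lt_or_ge n 0 with hn | hn
  · simp [syllableWord_of_neg hn, consReduce]
  · rw [syllableWord_of_pos (n := n + 1) (by omega), add_sub_cancel_right]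
    rcases hn.eq_or_lt with rfl | hn
    · cases L <;> rfl
    · simp [syllableWord_of_pos hn, consReduce]

theorem consReduce_false_syllableWord (n : ℤ) (L : List Syllable) :
    consReduce (0, false) (syllableWord n L) = syllableWord (n - 1) L := by
  rcases lt_or_ge 0 n with hn | hn
  · simp [syllableWord_of_pos hn, consReduce]
  · rw [syllableWord_of_neg (n := n - 1) (by omega), sub_add_cancel]
    rcases hn.eq_or_lt with rfl | hn
    · cases L <;> rfl
    · simp [syllableWord_of_neg hn, consReduce]

theorem foldr_consReduce_zeroPow (m n : ℤ) (L : List Syllable) :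
    (zeroPow m).foldr consReduce (syllableWord n L) = syllableWord (m + n) L := by
  induction m with
  | zero => rw [zero_add]; rfl
  | succ k ih =>
    rw [zeroPow_of_pos (by omega), add_sub_cancel_right, List.foldr_cons, ih,
      consReduce_true_syllableWord, add_right_comm]
  | pred k ih =>
    rw [zeroPow_of_neg (by omega), sub_add_cancel, List.foldr_cons, ih,
      consReduce_false_syllableWord, add_sub_right_comm]

theorem exists_reduce0_eq_syllableWord (w : List (ℕ × Bool)) :
    ∃ n L, reduce0 w = syllableWord n L := by
  rw [reduce0_eq_foldr]
  induction w with
  | nil => exact ⟨0, [], rfl⟩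
  | cons a w ih =>
    obtain ⟨n, L, hw⟩ := ih
    rw [List.foldr_cons, hw]
    obtain ⟨_ | j, ε⟩ := a
    · cases ε
      · exact ⟨n - 1, L, consReduce_false_syllableWord n L⟩
      · exact ⟨n + 1, L, consReduce_true_syllableWord n L⟩
    · exact ⟨0, ⟨j, ε, n⟩ :: L, consReduce_succ j ε _⟩

/-- A word is zero-reduced if it contains neither `x_0 x_0^{−1}` nor `x_0^{−1} x_0`. -/
def ZeroReduced (w : List (ℕ × Bool)) : Prop :=
  w.IsChain fun a b => ¬(a.1 = 0 ∧ b.1 = 0 ∧ a.2 = !b.2)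

theorem ZeroReduced.reduce0_eq {w : List (ℕ × Bool)} (hw : ZeroReduced w) : reduce0 w = w := by
  rw [reduce0_eq_foldr]
  induction w with
  | nil => rfl
  | cons a w ih =>
    rw [List.foldr_cons, ih hw.tail]
    cases w with
    | nil => rfl
    | cons b w => exact if_neg (List.isChain_cons_cons.1 hw).1

theorem ZeroReduced.exists_syllableWord {w : List (ℕ × Bool)} (hw : ZeroReduced w) :
    ∃ n L, w = syllableWord n L := by
  simpa only [hw.reduce0_eq] using exists_reduce0_eq_syllableWord w

theorem isChain_zeroPow {R : ℕ × Bool → ℕ × Bool → Prop} (hzero : ∀ ε, R (0, ε) (0, ε)) (n : ℤ) :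
    (zeroPow n).IsChain R := by
  rw [zeroPow_eq_replicate]
  exact List.isChain_replicate_of_rel _ (hzero _)

theorem isChain_syllableWord_cons {R : ℕ × Bool → ℕ × Bool → Prop} (hzero : ∀ ε, R (0, ε) (0, ε))
    (hlt : ∀ a b, a.1 < b.1 → R a b) (n : ℤ) (s : Syllable) (L : List Syllable) :
    (syllableWord n (s :: L)).IsChain R ↔
      (∀ b ∈ (syllableWord s.exp L).head?, R (s.index + 1, s.sign) b) ∧
        (syllableWord s.exp L).IsChain R := by
  rw [syllableWord, List.isChain_append, List.isChain_cons]
  refine ⟨fun h => h.2.1, fun h => ⟨isChain_zeroPow hzero n, h, fun a ha b hb => hlt a b ?_⟩⟩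
  obtain rfl : (s.index + 1, s.sign) = b := by simpa using hb
  rw [fst_eq_zero_of_mem_zeroPow (List.mem_of_getLast? ha)]
  exact s.index.succ_pos

theorem zeroReduced_syllableWord (n : ℤ) (L : List Syllable) : ZeroReduced (syllableWord n L) := by
  have hzero (ε : Bool) : ¬((0 : ℕ) = 0 ∧ (0 : ℕ) = 0 ∧ ε = !ε) := by simp
  induction L generalizing n with
  | nil => exact isChain_zeroPow hzero n
  | cons s L ih =>
    refine (isChain_syllableWord_cons hzero (fun a b hab => ?_) n s L).2 ⟨fun b _ => ?_, ih s.exp⟩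
    · omega
    · simp

theorem forall_mem_syllableWord_iff (p : ℕ) (n : ℤ) (L : List Syllable) :
    (∀ a ∈ syllableWord n L, a.1 ≤ p) ↔ ∀ s ∈ L, s.index < p := by
  have hzeroPow (n : ℤ) : ∀ a ∈ zeroPow n, a.1 ≤ p := fun a ha =>
    (fst_eq_zero_of_mem_zeroPow ha).trans_le p.zero_le
  induction L generalizing n with
  | nil => simpa [syllableWord] using hzeroPow n
  | cons s L ih =>
    simp only [syllableWord, List.forall_mem_append, List.forall_mem_cons, ih, Nat.succ_le_iff]
    exact and_iff_right (hzeroPow n)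

theorem cons_infix_of_cons_infix_append {α : Type*} {a : α} {u v w : List α} (ha : a ∉ v)
    (h : a :: u <:+: v ++ w) : a :: u <:+: w := by
  induction v with
  | nil => exact h
  | cons b v ih =>
    rw [List.mem_cons, not_or] at ha
    rw [List.cons_append, List.infix_cons_iff, List.cons_prefix_cons] at h
    exact ih ha.2 (h.resolve_left fun hb => ha.1 hb.1)

/-- The word `x_{s.index+1}^{s.sign} x_0^{s.exp} x_{t.index+1}^{t.sign}`, which joins the leading
letters of two consecutive syllables `s` and `t`. -/
def junction (s t : Syllable) : List (ℕ × Bool) :=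
  (s.index + 1, s.sign) :: (zeroPow s.exp ++ [(t.index + 1, t.sign)])

theorem junction_infix_syllableWord {s t : Syllable} {L : List Syllable} (h : [s, t] <:+: L)
    (n : ℤ) : junction s t <:+: syllableWord n L := by
  obtain ⟨A, B, rfl⟩ := h
  refine ⟨syllableWord n A, syllableWord t.exp B, ?_⟩
  simp [syllableWord_append_cons, syllableWord, junction]

theorem exists_infix_of_junction_infix_syllableWord {s t : Syllable} {n : ℤ} {L : List Syllable}
    (h : junction s t <:+: syllableWord n L) : ∃ e, [s, { t with exp := e }] <:+: L := by
  have notMem (r : Syllable) (m : ℤ) : (r.index + 1, r.sign) ∉ zeroPow m := fun hmem =>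
    Nat.succ_ne_zero _ (fst_eq_zero_of_mem_zeroPow hmem)
  induction L generalizing n with
  | nil => exact absurd (h.subset List.mem_cons_self) (notMem s n)
  | cons r L ih =>
    rcases List.infix_cons_iff.1 (cons_infix_of_cons_infix_append (notMem s n) h) with h | h
    · obtain ⟨hr, v, hv⟩ := List.cons_prefix_cons.1 h
      cases L with
      | nil =>
        have hmem : (t.index + 1, t.sign) ∈ syllableWord r.exp [] := by simp [← hv]
        exact absurd hmem (notMem t r.exp)
      | cons r' L =>
        rw [syllableWord, List.append_assoc] at hv
        obtain ⟨hexp, hindex, hsign, -⟩ := zeroPow_append_cons_inj.1 hv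
        obtain ⟨hindex', hsign'⟩ := Prod.mk.inj hr
        refine ⟨r'.exp, [], L, ?_⟩
        rw [Syllable.ext (Nat.succ.inj hindex') hsign' hexp, hindex, hsign]
        rfl
    · obtain ⟨e, he⟩ := ih h
      exact ⟨e, he.trans (List.suffix_cons r L).isInfix⟩

/-- Compatibility of a syllable `s` with a syllable `t` following it: the condition on `s` and the
leading letter of `t` under which `junction s t` is not forbidden. -/
def Compatible (s t : Syllable) : Prop :=
  s.exp < 0 ∨
    (s.exp = 0 ∧ (s.index < t.index ∨ (s.index = t.index ∧ s.sign = t.sign) ∨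
      (t.index < s.index ∧ t.sign = false))) ∨
    (s.exp = 1 ∧ s.index ≤ t.index ∧ t.sign = false)

theorem forbidden_junction {p : ℕ} {s t : Syllable} (hs : s.index < p - 1) (ht : t.index < p - 1)
    (hst : ¬Compatible s t) : Forbidden p (junction s t) := by
  obtain ⟨a, ε, e⟩ := s
  obtain ⟨b, δ, _⟩ := t
  simp only [Compatible] at hs ht hst
  lift e to ℕ using by omega
  simp only [junction, zeroPow_natCast]
  rcases lt_or_ge b a with hba | hab
  · cases δ
    · obtain ⟨k, rfl⟩ : ∃ k, e = k + 1 := ⟨e - 1, by grind⟩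
      exact .inr (.inr (.inl ⟨a + 1, b + 1, k, ε, by omega, by omega, hs, rfl⟩))
    · exact .inr (.inl ⟨a + 1, b + 1, e, ε, by omega, by omega, hs, rfl⟩)
  · rcases e with _ | e
    · obtain ⟨rfl, hδ⟩ : a = b ∧ ε ≠ δ := by grind
      exact .inl ⟨a + 1, ε, hs, by rw [Bool.eq_not_of_ne hδ.symm]; rfl⟩
    · cases δ
      · obtain ⟨k, rfl⟩ : ∃ k, e = k + 1 := ⟨e - 1, by grind⟩
        exact .inr (.inr (.inr (.inr ⟨a + 1, b + 1, k, ε, by omega, by omega, ht, rfl⟩)))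
      · exact .inr (.inr (.inr (.inl ⟨a + 1, b + 1, e, ε, by omega, by omega, ht, rfl⟩)))

theorem Forbidden.eq_zero_pair_or_junction {p : ℕ} {u : List (ℕ × Bool)} (hu : Forbidden p u) :
    (∃ ε, u = [(0, ε), (0, !ε)]) ∨ ∃ s t, ¬Compatible s t ∧ u = junction s t := by
  have junction_of {a b : ℕ} (ε δ : Bool) (k : ℕ) (ha : 1 ≤ a) (hb : 1 ≤ b)
      (h : ¬Compatible ⟨a - 1, ε, k⟩ ⟨b - 1, δ, 0⟩) :
      ∃ s t, ¬Compatible s t ∧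
        (a, ε) :: (List.replicate k (0, true) ++ [(b, δ)]) = junction s t :=
    ⟨_, _, h, by simp [junction, zeroPow_natCast, ha, hb]⟩
  rcases hu with ⟨_ | i, ε, -, rfl⟩ | ⟨a, b, k, ε, hb, hba, -, rfl⟩ |
    ⟨a, b, k, ε, hb, hba, -, rfl⟩ | ⟨a, b, k, ε, ha, hab, -, rfl⟩ | ⟨a, b, k, ε, ha, hab, -, rfl⟩
  · exact .inl ⟨ε, rfl⟩
  · exact .inr (junction_of ε (!ε) 0 i.succ_pos i.succ_pos (by simp [Compatible]))
  · exact .inr (junction_of ε true k (hb.trans hba.le) hb (by grind [Compatible]))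
  · exact .inr (junction_of ε false (k + 1) (hb.trans hba.le) hb (by grind [Compatible]))
  · exact .inr (junction_of ε true (k + 1) ha (ha.trans hab) (by grind [Compatible]))
  · exact .inr (junction_of ε false (k + 2) ha (ha.trans hab) (by grind [Compatible]))

/-- The syllable lists arising from words of `N_fin(p)`: the leading letters are among
`x_1^{±1}, …, x_{p−1}^{±1}`, and consecutive syllables are compatible. -/
def Admissible (p : ℕ) (L : List Syllable) : Prop :=
  (∀ s ∈ L, s.index < p - 1) ∧ L.IsChain Compatible

theorem nFin_syllableWord_iff {p : ℕ} {n : ℤ} {L : List Syllable} :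
    NFin p (syllableWord n L) ↔ Admissible p L := by
  rw [NFin, forall_mem_syllableWord_iff]
  refine and_congr_right fun hL => ⟨fun h => ?_, fun h u hu hforb => ?_⟩
  · refine (List.isChain_isInfix L).imp fun s t hst => ?_
    by_contra hcompat
    exact h _ (junction_infix_syllableWord hst n)
      (forbidden_junction (hL s (hst.subset (by simp))) (hL t (hst.subset (by simp))) hcompat)
  · rcases hforb.eq_zero_pair_or_junction with ⟨ε, rfl⟩ | ⟨s, t, hcompat, rfl⟩
    · have hpair : ZeroReduced _ := (zeroReduced_syllableWord n L).infix hu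
      simp [ZeroReduced] at hpair
    · obtain ⟨e, hst⟩ := exists_infix_of_junction_infix_syllableWord hu
      have hcompat' := List.isChain_pair.1 (h.infix hst)
      exact hcompat hcompat'

theorem NFin.zeroReduced {p : ℕ} {w : List (ℕ × Bool)} (hw : NFin p w) : ZeroReduced w := by
  refine (List.isChain_isInfix w).imp ?_
  rintro ⟨i, ε⟩ ⟨j, δ⟩ hinfix ⟨rfl, rfl, hsign⟩
  exact hw.2 _ hinfix (.inl ⟨0, ε, Nat.zero_le _, by simp_all⟩)

theorem NFin.exists_syllableWord {p : ℕ} {w : List (ℕ × Bool)} (hw : NFin p w) :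
    ∃ n L, Admissible p L ∧ w = syllableWord n L := by
  obtain ⟨n, L, rfl⟩ := hw.zeroReduced.exists_syllableWord
  exact ⟨n, L, nFin_syllableWord_iff.1 hw, rfl⟩

/-- Two consecutive letters allowed in a word of `N_inf(p)`. -/
def NInfStep (p : ℕ) (a b : ℕ × Bool) : Prop :=
  a.1 < b.1 ∨ (a.1 = b.1 ∧ a.2 = b.2) ∨ (b.1 < a.1 ∧ a.1 - b.1 < p ∧ b.2 = false)

theorem nInf_iff_isChain {p : ℕ} {w : List (ℕ × Bool)} : NInf p w ↔ w.IsChain (NInfStep p) :=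
  Iff.rfl

theorem NInf.zeroReduced {p : ℕ} {w : List (ℕ × Bool)} (hw : NInf p w) : ZeroReduced w := by
  refine List.IsChain.imp (fun a b hab hcancel => ?_) hw
  grind

theorem nInf_zeroPow (p : ℕ) (n : ℤ) : NInf p (zeroPow n) :=
  isChain_zeroPow (fun _ => .inr (.inl ⟨rfl, rfl⟩)) n

theorem nInf_syllableWord_cons_iff {p : ℕ} {n : ℤ} {s : Syllable} {L : List Syllable} :
    NInf p (syllableWord n (s :: L)) ↔
      ((s.exp < 0 ∧ s.index + 1 < p) ∨
        (s.exp = 0 ∧ ∀ t ∈ L.head?, NInfStep p (s.index + 1, s.sign) (t.index + 1, t.sign))) ∧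
        NInf p (syllableWord s.exp L) := by
  rw [nInf_iff_isChain, isChain_syllableWord_cons (fun _ => .inr (.inl ⟨rfl, rfl⟩))
    (fun _ _ => .inl), ← nInf_iff_isChain]
  refine and_congr_left fun _ => ?_
  rcases lt_trichotomy s.exp 0 with hexp | hexp | hexp
  · simp [syllableWord_of_neg hexp, NInfStep, hexp, hexp.ne]
  · cases L <;> simp [hexp, syllableWord, zeroPow]
  · simp [syllableWord_of_pos hexp, NInfStep, hexp.not_gt, hexp.ne']

/-- The depth `d` of a list of syllables: in the word of `N_inf(p)` corresponding to it, the first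
syllable comes from a letter `x_j` with `j = r + d(p−1)`. -/
def depth : List Syllable → ℕ
  | [] => 0
  | s :: L => (s.exp + depth L).toNat

/-- The syllables of the word of `N_inf(p)` whose image under the bar map has syllables `L`. -/
def unbar (p : ℕ) : List Syllable → List Syllable
  | [] => []
  | s :: L =>
    ⟨s.index + depth (s :: L) * (p - 1), s.sign, min (s.exp + depth L) 0⟩ :: unbar p L

theorem nInfStep_iff_compatible {p d d' : ℕ} {s t : Syllable} (hs : s.index < p - 1)
    (ht : t.index < p - 1) (hexp : s.exp = d - d') :
    NInfStep p (s.index + d * (p - 1) + 1, s.sign) (t.index + d' * (p - 1) + 1, t.sign) ↔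
      Compatible s t := by
  obtain ⟨q, rfl⟩ : ∃ q, p = q + 1 := ⟨p - 1, by omega⟩
  simp only [NInfStep, Compatible, Nat.add_sub_cancel, hexp] at hs ht ⊢
  have hmul {c c' : ℕ} (h : c < c') : c * q + q ≤ c' * q := by
    rw [← Nat.succ_mul]
    exact Nat.mul_le_mul_right q h
  rcases lt_trichotomy d d' with h | rfl | h
  · have hlt : s.index + d * q < t.index + d' * q := by
      have := hmul h
      omega
    grind
  · grind
  · rcases eq_or_lt_of_le (Nat.succ_le_of_lt h) with rfl | h
    · have : d'.succ * q = d' * q + q := Nat.succ_mul d' q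
      grind
    · have hgap : t.index + d' * q + (q + 1) ≤ s.index + d * q := by
        have := hmul h
        have := hmul d'.lt_succ_self
        omega
      grind

theorem nInf_syllableWord_unbar_iff {p : ℕ} {n : ℤ} {L : List Syllable}
    (hL : ∀ s ∈ L, s.index < p - 1) :
    NInf p (syllableWord n (unbar p L)) ↔ L.IsChain Compatible := by
  induction L generalizing n with
  | nil => simpa [unbar, syllableWord] using nInf_zeroPow p n
  | cons s L ih =>
    obtain ⟨hs, hL⟩ := List.forall_mem_cons.1 hL
    rw [unbar, nInf_syllableWord_cons_iff, ih hL, List.isChain_cons]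
    refine and_congr_left fun _ => ?_
    simp only [depth]
    rcases lt_or_ge (s.exp + depth L) 0 with hneg | hnonneg
    · have hcompat (t) : Compatible s t := .inl (by omega)
      simp [hcompat, hneg, Int.toNat_of_nonpos hneg.le]
      omega
    · cases L with
      | nil => simp [unbar, hnonneg]
      | cons t L =>
        have hexp : s.exp = (s.exp + depth (t :: L)).toNat - depth (t :: L) := by omega
        simp [hnonneg, unbar, ← nInfStep_iff_compatible hs (hL t (by simp)) hexp]

theorem exists_unbar_eq {p : ℕ} (hp : 2 ≤ p) {n : ℤ} {M : List Syllable}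
    (hM : NInf p (syllableWord n M)) : ∃ L, (∀ s ∈ L, s.index < p - 1) ∧ unbar p L = M := by
  induction M generalizing n with
  | nil => exact ⟨[], by simp, rfl⟩
  | cons s M ih =>
    obtain ⟨hstep, hM⟩ := nInf_syllableWord_cons_iff.1 hM
    obtain ⟨L, hL, rfl⟩ := ih hM
    rcases hstep with ⟨hneg, hs⟩ | ⟨hzero, -⟩
    · refine ⟨⟨s.index, s.sign, s.exp - depth L⟩ :: L,
        List.forall_mem_cons.2 ⟨Nat.lt_sub_of_add_lt hs, hL⟩, ?_⟩
      simp [unbar, depth, hneg.le, Int.toNat_of_nonpos]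
    · refine ⟨⟨s.index % (p - 1), s.sign, (s.index / (p - 1) : ℕ) - depth L⟩ :: L,
        List.forall_mem_cons.2 ⟨Nat.mod_lt _ (by omega), hL⟩, ?_⟩
      simp only [unbar, depth, sub_add_cancel, Int.toNat_natCast, Nat.mod_add_div',
        min_eq_right (Int.natCast_nonneg _)]
      rw [← hzero]

theorem NInf.exists_syllableWord_unbar {p : ℕ} (hp : 2 ≤ p) {w : List (ℕ × Bool)}
    (hw : NInf p w) : ∃ n L, Admissible p L ∧ w = syllableWord n (unbar p L) := by
  obtain ⟨n, M, rfl⟩ := hw.zeroReduced.exists_syllableWord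
  obtain ⟨L, hL, rfl⟩ := exists_unbar_eq hp hw
  exact ⟨n, L, ⟨hL, (nInf_syllableWord_unbar_iff hL).1 hw⟩, rfl⟩

theorem letterExpand_succ {p r : ℕ} (hr : r < p - 1) (d : ℕ) (ε : Bool) :
    letterExpand p (r + d * (p - 1) + 1, ε) = zeroPow (-d) ++ (r + 1, ε) :: zeroPow d := by
  have hdiv : (r + d * (p - 1)) / (p - 1) = d := by
    rw [Nat.add_mul_div_right _ _ (by omega), Nat.div_eq_of_lt hr, zero_add]
  have hmod : (r + d * (p - 1)) % (p - 1) = r := by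
    rw [Nat.add_mul_mod_self_right, Nat.mod_eq_of_lt hr]
  simp [letterExpand, hdiv, hmod, zeroPow_natCast, zeroPow_neg_natCast]

theorem barMap_syllableWord_unbar {p : ℕ} {L : List Syllable} (hL : ∀ s ∈ L, s.index < p - 1)
    (n : ℤ) : barMap p (syllableWord n (unbar p L)) = syllableWord (n - depth L) L := by
  have expand_zeroPow := flatMap_letterExpand_zeroPow p
  rw [barMap, reduce0_eq_foldr, ← List.flatMap_def]
  induction L generalizing n with
  | nil =>
    rw [unbar, syllableWord, expand_zeroPow, depth, Nat.cast_zero, sub_zero]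
    exact (foldr_consReduce_zeroPow n 0 []).trans (by rw [add_zero])
  | cons s L ih =>
    obtain ⟨hs, hL⟩ := List.forall_mem_cons.1 hL
    have hexp : depth (s :: L) + (min (s.exp + depth L) 0 - depth L) = s.exp := by
      rw [depth]; omega
    rw [unbar, syllableWord, List.flatMap_append, List.flatMap_cons, expand_zeroPow,
      letterExpand_succ hs]
    simp only [List.foldr_append, List.foldr_cons, ih hL, foldr_consReduce_zeroPow,
      hexp, consReduce_succ]
    rw [← syllableWord_zero_cons, foldr_consReduce_zeroPow, foldr_consReduce_zeroPow, add_zero,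
      sub_eq_add_neg]

/-- The bar map restricted to `N_inf(p)` is a bijection onto `N_fin(p)`. -/
theorem stmt5 (p : ℕ) (hp : 2 ≤ p) :
    Set.BijOn (barMap p) {w | NInf p w} {w | NFin p w} := by
  refine ⟨fun w hw => ?_, fun v hv w hw h => ?_, fun w hw => ?_⟩
  · obtain ⟨n, L, hL, rfl⟩ := NInf.exists_syllableWord_unbar hp hw
    rw [barMap_syllableWord_unbar hL.1]
    exact nFin_syllableWord_iff.2 hL
  · obtain ⟨m, L, hL, rfl⟩ := NInf.exists_syllableWord_unbar hp hv
    obtain ⟨n, M, hM, rfl⟩ := NInf.exists_syllableWord_unbar hp hw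
    rw [barMap_syllableWord_unbar hL.1, barMap_syllableWord_unbar hM.1, syllableWord_inj] at h
    obtain ⟨hexp, rfl⟩ := h
    rw [sub_left_inj.1 hexp]
  · obtain ⟨n, L, hL, rfl⟩ := NFin.exists_syllableWord hw
    refine ⟨syllableWord (n + depth L) (unbar p L), (nInf_syllableWord_unbar_iff hL.1).2 hL.2, ?_⟩
    rw [barMap_syllableWord_unbar hL.1, add_sub_cancel_right]
end

section
/- The evaluation map from N_fin(p) to the generalized Thompson group F(p), sending a word over {x_0^{±1}, …, x_{p-1}^{±1}} to the corresponding product in F(p), is a bijection: every element of F(p) is represented by exactly one word containing no forbidden subword. -/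
/-- Relators of the generalized Thompson group `F(p)`:
`x_j x_i x_{j+p-1}⁻¹ x_i⁻¹` for `i < j`. -/
def ThompsonRels (p : ℕ) : Set (FreeGroup ℕ) :=
  {r | ∃ i j : ℕ, i < j ∧
    r = FreeGroup.of j * FreeGroup.of i * (FreeGroup.of (j + p - 1))⁻¹ * (FreeGroup.of i)⁻¹}

/-- The generalized Thompson group `F(p)` as a presented group. -/
abbrev FP (p : ℕ) := PresentedGroup (ThompsonRels p)

/-- The generator `x_i` of `F(p)`. -/
def xgen (p : ℕ) (i : ℕ) : FP p := PresentedGroup.of i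

/-- Evaluation of a word in the `x_i^{±1}` as an element of `F(p)`. -/
def evalWord (p : ℕ) (w : List (ℕ × Bool)) : FP p :=
  (w.map fun a => if a.2 then xgen p a.1 else (xgen p a.1)⁻¹).prod

/-! Put `q = p - 1`. The conjugates `X_{a - nq} = x_0^n x_a x_0^{-n}`, where `1 ≤ a ≤ q`, satisfy
`X_j X_i = X_i X_{j+q}` for all integers `i < j`, and moving all powers of `x_0` to the right turns
a word in the `x_i^{±1}` into a word in the `X_j^{±1}` followed by a power of `x_0`. Words without
forbidden subwords correspond in this way to the words in the `X_j^{±1}` in which no cancellation is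
possible and no letter can be moved to the right past a letter of smaller index. As in van der
Waerden's proof of the normal form theorem for free products, `F(p)` acts on these normal forms by
left multiplication. Acting on the empty normal form, the value of a word without forbidden subwords
gives back the normal form of that word, whence injectivity. Conversely, letting `g` act on the
empty normal form yields a normal form of value `g`, whence surjectivity. -/

namespace GeneralizedThompson

/-- The integer `n` with the sign of an exponent `±1`, encoded as in `FreeGroup` by a `Bool`. -/
def signed (d : Bool) (n : ℤ) : ℤ := bif d then n else -n

@[simp] theorem signed_true (n : ℤ) : signed true n = n := rfl

@[simp] theorem signed_false (n : ℤ) : signed false n = -n := rfl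

/-- The signed generators `X_j^{±1}` with `j : ℤ`, where `X_{a - nq} = x_0^n x_a x_0^{-n}` for
`1 ≤ a ≤ q`. With `p = q + 1`, they satisfy `X_j X_i = X_i X_{j+q}` for all integers `i < j`. -/
abbrev Letter := ℤ × Bool

/-- The letter `a'` in the relation `a b = b a'` that moves `a` to the right past `b`. -/
def slide (q : ℕ) (b a : Letter) : Letter := (a.1 + signed b.2 q, a.2)

/-- The letter `a` can be moved to the right past `b`: up to inverting letters, the equation
`a b = b (slide q b a)` is an instance of `X_j X_i = X_i X_{j+q}` with `i < j`. If `b = X_i⁻¹`, it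
is the index of `slide q b a` that takes the role of `j`, whence the second inequality. -/
def Passes (q : ℕ) (a b : Letter) : Prop := b.1 < a.1 ∧ b.1 < (slide q b a).1

instance (q : ℕ) (a b : Letter) : Decidable (Passes q a b) := inferInstanceAs (Decidable (_ ∧ _))

/-- Neither a cancellation nor a relation of `Passes` applies to the two-letter word `a b`. -/
def Stuck (q : ℕ) (a b : Letter) : Prop := ¬ Passes q a b ∧ b ≠ (a.1, !a.2)

/-- The normal words in the letters `X_j^{±1}`: nothing cancels, and every letter has been moved to
the right as far as the relations allow. -/
abbrev IsNormal (q : ℕ) (z : List Letter) : Prop := z.IsChain (Stuck q)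

/-- Left multiplication of a normal word by a letter. -/
def push (q : ℕ) : Letter → List Letter → List Letter
  | a, [] => [a]
  | a, b :: z =>
    if b = (a.1, !a.2) then z
    else if Passes q a b then b :: push q (slide q b a) z
    else a :: b :: z

section Push

variable {q : ℕ} {a b c : Letter} {z : List Letter}

theorem Passes.ne_inv (h : Passes q a b) : b ≠ (a.1, !a.2) := by
  rintro rfl
  exact lt_irrefl _ h.1

theorem Passes.trans (hab : Passes q a b) (hbc : Passes q b c) : Passes q a c := by
  simp only [Passes, slide] at *
  omega

theorem Passes.slide_left (hab : Passes q a b) (hbc : Passes q b c) :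
    Passes q (slide q b a) c := by
  grind [Passes, slide, signed]

theorem Passes.slide_slide (h : Passes q a b) : Passes q (slide q c a) (slide q c b) := by
  simp only [Passes, slide] at *
  omega

theorem Passes.slide_inv (h : Passes q a b) : Passes q (slide q b a) (b.1, !b.2) := by
  obtain ⟨i, d⟩ := b
  cases d <;> simpa [Passes, slide, and_comm] using h

theorem slide_inv_slide : slide q (b.1, !b.2) (slide q b a) = a := by
  obtain ⟨i, d⟩ := b
  cases d <;> simp [slide]

theorem slide_slide_slide :
    slide q (slide q c b) (slide q c a) = slide q c (slide q b a) := by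
  simp only [slide, Prod.mk.injEq, and_true]
  ring

theorem Passes.stuck_slide [NeZero q] (h : Passes q a b) : Stuck q b (slide q b a) := by
  have := NeZero.pos q
  obtain ⟨j, e⟩ := a
  obtain ⟨i, d⟩ := b
  grind [Stuck, Passes, slide, signed]

/-- The situation of `push q a (b :: c :: d :: z)` in which `a`, having passed `b`, cancels `c`. -/
theorem Stuck.trans_of_passes [NeZero q] {d : Letter}
    (hbc : Stuck q b ((slide q b a).1, !a.2)) (hcd : Stuck q ((slide q b a).1, !a.2) d)
    (h : Passes q a b) : Stuck q b d := by
  have := NeZero.pos q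
  obtain ⟨j, e⟩ := a
  obtain ⟨i, f⟩ := b
  obtain ⟨k, g⟩ := d
  grind [Stuck, Passes, slide, signed]

theorem push_inv_cons : push q a ((a.1, !a.2) :: z) = z := by
  rw [push, if_pos rfl]

theorem push_cons_of_passes (h : Passes q a b) :
    push q a (b :: z) = b :: push q (slide q b a) z := by
  rw [push, if_neg h.ne_inv, if_pos h]

theorem push_of_isNormal_cons (h : IsNormal q (a :: z)) : push q a z = a :: z := by
  cases z with
  | nil => rfl
  | cons b z =>
    have hab := (List.isChain_cons_cons.1 h).1
    rw [push, if_neg hab.2, if_neg hab.1]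

theorem IsNormal.cons_push_slide [NeZero q] (hz : IsNormal q (b :: z)) (hab : Passes q a b) :
    IsNormal q (b :: push q (slide q b a) z) := by
  induction z generalizing a b with
  | nil => exact List.isChain_pair.2 hab.stuck_slide
  | cons c z ih =>
    obtain ⟨hbc, hz⟩ := List.isChain_cons_cons.1 hz
    rw [push]
    split_ifs with hc hac
    · subst hc
      cases z with
      | nil => exact List.isChain_singleton b
      | cons d z =>
        obtain ⟨hcd, hz⟩ := List.isChain_cons_cons.1 hz
        exact List.isChain_cons_cons.2 ⟨hbc.trans_of_passes hcd hab, hz⟩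
    · exact List.isChain_cons_cons.2 ⟨hbc, ih hz hac⟩
    · exact List.isChain_cons_cons.2 ⟨hab.stuck_slide, List.isChain_cons_cons.2 ⟨⟨hac, hc⟩, hz⟩⟩

theorem IsNormal.push [NeZero q] (hz : IsNormal q z) (a : Letter) : IsNormal q (push q a z) := by
  cases z with
  | nil => exact List.isChain_singleton a
  | cons b z =>
    rw [GeneralizedThompson.push]
    split_ifs with hb hab
    · exact hz.tail
    · exact hz.cons_push_slide hab
    · exact List.isChain_cons_cons.2 ⟨⟨hab, hb⟩, hz⟩

theorem push_inv_push (hz : IsNormal q z) (a : Letter) :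
    push q (a.1, !a.2) (push q a z) = z := by
  induction z generalizing a with
  | nil => simp [push]
  | cons b z ih =>
    rw [push]
    split_ifs with hb hab
    · subst hb
      exact push_of_isNormal_cons hz
    · have hab' : Passes q (a.1, !a.2) b := hab
      rw [push_cons_of_passes hab']
      exact congrArg (b :: ·) (ih hz.tail (slide q b a))
    · simpa using push_inv_cons (q := q) (a := (a.1, !a.2)) (z := b :: z)

theorem push_push_of_passes [NeZero q] (hz : IsNormal q z) (hab : Passes q a b) :
    push q a (push q b z) = push q b (push q (slide q b a) z) := by
  induction z generalizing a b with
  | nil =>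
    rw [push, push_cons_of_passes hab,
      push_of_isNormal_cons (IsNormal.cons_push_slide (List.isChain_singleton b) hab)]
  | cons c z ih =>
    by_cases hc : c = (b.1, !b.2)
    · subst hc
      rw [push_inv_cons, push_cons_of_passes hab.slide_inv, slide_inv_slide, push_inv_cons]
    by_cases hbc : Passes q b c
    · rw [push_cons_of_passes hbc, push_cons_of_passes (hab.trans hbc),
        push_cons_of_passes (hab.slide_left hbc), push_cons_of_passes hbc,
        ih hz.tail hab.slide_slide, slide_slide_slide]
    · have hbz : IsNormal q (b :: c :: z) := List.isChain_cons_cons.2 ⟨⟨hbc, hc⟩, hz⟩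
      rw [push_of_isNormal_cons hbz, push_cons_of_passes hab,
        push_of_isNormal_cons (hbz.cons_push_slide hab)]

end Push

/-- A pair `(z, n)` stands for the product of the letters of `z` followed by `x_0^n`. -/
abbrev Code := List Letter × ℤ

/-- Left multiplication by `x_0^n`, which conjugates `X_j` to `X_{j - nq}`. -/
def translate (q : ℕ) (n : ℤ) (y : Code) : Code :=
  (y.1.map fun a => (a.1 - n * q, a.2), y.2 + n)

/-- Left multiplication by the generator `x_i` or its inverse. -/
def step (q : ℕ) (a : ℕ × Bool) (y : Code) : Code :=
  if a.1 = 0 then translate q (signed a.2 1) y else (push q (a.1, a.2) y.1, y.2)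

section Translate

variable {q : ℕ}

theorem translate_translate (m n : ℤ) (y : Code) :
    translate q m (translate q n y) = translate q (m + n) y := by
  simp only [translate, List.map_map, Prod.mk.injEq]
  exact ⟨List.map_congr_left fun a _ => Prod.ext (by simp only [Function.comp]; ring) rfl, by ring⟩

theorem translate_zero (y : Code) : translate q 0 y = y := by
  simp [translate]

theorem passes_translate_iff (n : ℤ) (a b : Letter) :
    Passes q (a.1 - n * q, a.2) (b.1 - n * q, b.2) ↔ Passes q a b := by
  simp only [Passes, slide]
  omega

theorem isNormal_translate_iff (n : ℤ) (y : Code) :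
    IsNormal q (translate q n y).1 ↔ IsNormal q y.1 := by
  have hstuck (a b : Letter) : Stuck q (a.1 - n * q, a.2) (b.1 - n * q, b.2) ↔ Stuck q a b := by
    simp only [Stuck, passes_translate_iff, ne_eq, Prod.ext_iff, sub_left_inj]
  simp only [IsNormal, translate, List.isChain_map, hstuck]

theorem push_translate (n : ℤ) (a : Letter) (z : List Letter) (s : ℤ) :
    push q (a.1 - n * q, a.2) (translate q n (z, s)).1 = (translate q n (push q a z, s)).1 := by
  simp only [translate]
  induction z generalizing a with
  | nil => rfl
  | cons b z ih =>
    have hslide : slide q (b.1 - n * q, b.2) (a.1 - n * q, a.2) =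
        ((slide q b a).1 - n * q, (slide q b a).2) := by
      simp only [slide, Prod.mk.injEq, and_true]
      ring
    simp only [List.map_cons, push, passes_translate_iff, Prod.ext_iff, sub_left_inj]
    split_ifs
    · rfl
    · rw [hslide, ih, List.map_cons]
    · rfl

end Translate

section Representation

variable {q : ℕ} {y : Code}

theorem isNormal_step [NeZero q] (a : ℕ × Bool) (hy : IsNormal q y.1) :
    IsNormal q (step q a y).1 := by
  rw [step]
  split_ifs
  · exact (isNormal_translate_iff _ _).2 hy
  · exact hy.push _

theorem step_inv_step (hy : IsNormal q y.1) (i : ℕ) (e : Bool) :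
    step q (i, !e) (step q (i, e) y) = y := by
  by_cases hi : i = 0
  · cases e <;> simp [step, hi, translate_translate, translate_zero]
  · simp only [step, if_neg hi]
    exact Prod.ext (push_inv_push hy (i, e)) rfl

theorem step_step [NeZero q] (hy : IsNormal q y.1) {i j : ℕ} (hij : i < j) :
    step q (j, true) (step q (i, true) y) = step q (i, true) (step q (j + q, true) y) := by
  have hj : j ≠ 0 := by omega
  have hjq : j + q ≠ 0 := by omega
  by_cases hi : i = 0
  · simp only [step, hi, if_neg hj, if_neg hjq, if_true, signed_true]
    refine Prod.ext ?_ rfl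
    simpa using push_translate (q := q) 1 ((j + q : ℕ), true) y.1 y.2
  · simp only [step, if_neg hi, if_neg hj, if_neg hjq]
    have hpass : Passes q (j, true) (i, true) := by
      simp only [Passes, slide, signed_true]
      omega
    exact Prod.ext (push_push_of_passes hy hpass) rfl

/-- The pairs `(z, n)` with `z` normal: the set on which `F(q + 1)` is made to act. -/
abbrev NormalCode (q : ℕ) := {y : Code // IsNormal q y.1}

/-- The permutation of the normal codes by which the generator `x_i` acts. -/
def stepPerm (q : ℕ) [NeZero q] (i : ℕ) : Equiv.Perm (NormalCode q) where
  toFun y := ⟨step q (i, true) y.1, isNormal_step _ y.2⟩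
  invFun y := ⟨step q (i, false) y.1, isNormal_step _ y.2⟩
  left_inv y := Subtype.ext (step_inv_step y.2 i true)
  right_inv y := Subtype.ext (step_inv_step y.2 i false)

theorem stepPerm_mul_stepPerm [NeZero q] {i j : ℕ} (hij : i < j) :
    stepPerm q j * stepPerm q i = stepPerm q i * stepPerm q (j + q) :=
  Equiv.ext fun y => Subtype.ext (step_step y.2 hij)

/-- The action of `F(q + 1)` on the normal codes, which models left multiplication. -/
def rep (q : ℕ) [NeZero q] : FP (q + 1) →* Equiv.Perm (NormalCode q) :=
  PresentedGroup.toGroup (f := stepPerm q) (by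
    rintro r ⟨i, j, hij, rfl⟩
    have hrel : stepPerm q j * stepPerm q i = stepPerm q i * stepPerm q (j + (q + 1) - 1) :=
      stepPerm_mul_stepPerm hij
    simp only [map_mul, map_inv, FreeGroup.lift_apply_of]
    rw [hrel, mul_inv_cancel_right, mul_inv_cancel])

theorem evalWord_eq_lift (p : ℕ) (w : List (ℕ × Bool)) :
    evalWord p w = FreeGroup.lift (xgen p) (FreeGroup.mk w) := by
  simp only [evalWord, FreeGroup.lift_mk, Bool.cond_eq_ite]

theorem evalWord_surjective (p : ℕ) : Function.Surjective (evalWord p) := by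
  intro g
  obtain ⟨x, rfl⟩ := PresentedGroup.mk_surjective _ g
  have hlift : FreeGroup.lift (xgen p) = PresentedGroup.mk (ThompsonRels p) :=
    FreeGroup.ext_hom _ _ fun _ => FreeGroup.lift_apply_of
  exact ⟨x.toWord, by rw [evalWord_eq_lift, FreeGroup.mk_toWord, hlift]⟩

theorem rep_evalWord_apply [NeZero q] (w : List (ℕ × Bool)) (y : NormalCode q) :
    (rep q (evalWord (q + 1) w) y).1 = w.foldr (step q) y.1 := by
  have hgen (i : ℕ) : rep q (xgen (q + 1) i) = stepPerm q i := PresentedGroup.toGroup.of _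
  induction w with
  | nil => simp [evalWord]
  | cons a w ih =>
    obtain ⟨i, e⟩ := a
    have hcons : evalWord (q + 1) ((i, e) :: w) =
        (if e then xgen (q + 1) i else (xgen (q + 1) i)⁻¹) * evalWord (q + 1) w := rfl
    rw [hcons, map_mul, Equiv.Perm.mul_apply, List.foldr_cons, ← ih]
    cases e
    · simp only [Bool.false_eq_true, if_false, map_inv, hgen]
      rfl
    · simp only [if_true, hgen]
      rfl

end Representation

/-- The code of a word: powers of `x_0` are moved to the end, turning the other generators into
letters `X_j`. No other relation and no cancellation is applied. -/
def enc (q : ℕ) : List (ℕ × Bool) → Code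
  | [] => ([], 0)
  | a :: w =>
    if a.1 = 0 then translate q (signed a.2 1) (enc q w)
    else (((a.1 : ℤ), a.2) :: (enc q w).1, (enc q w).2)

section Encoding

variable {q : ℕ}

theorem enc_zero_cons (e : Bool) (w : List (ℕ × Bool)) :
    enc q ((0, e) :: w) = translate q (signed e 1) (enc q w) := by
  rw [enc, if_pos rfl]

theorem enc_cons {i : ℕ} (hi : i ≠ 0) (e : Bool) (w : List (ℕ × Bool)) :
    enc q ((i, e) :: w) = (((i : ℤ), e) :: (enc q w).1, (enc q w).2) := by
  rw [enc, if_neg hi]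

theorem enc_replicate_append (m : ℕ) (e : Bool) (w : List (ℕ × Bool)) :
    enc q (List.replicate m (0, e) ++ w) = translate q (signed e m) (enc q w) := by
  induction m with
  | zero => cases e <;> simp [translate_zero]
  | succ m ih =>
    rw [List.replicate_succ, List.cons_append, enc_zero_cons, ih, translate_translate]
    congr 1
    cases e
    · simp only [signed_false, Nat.cast_succ]
      ring
    · simp only [signed_true, Nat.cast_succ]
      ring

theorem isNormal_enc_of_isNormal_enc_append {u v : List (ℕ × Bool)}
    (h : IsNormal q (enc q (u ++ v)).1) : IsNormal q (enc q v).1 := by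
  induction u with
  | nil => exact h
  | cons a u ih =>
    refine ih ?_
    rw [List.cons_append, enc] at h
    split_ifs at h
    · exact (isNormal_translate_iff _ _).1 h
    · exact h.tail

theorem foldr_step_eq_enc {w : List (ℕ × Bool)} (h : IsNormal q (enc q w).1) :
    w.foldr (step q) ([], 0) = enc q w := by
  induction w with
  | nil => rfl
  | cons a w ih =>
    rw [List.foldr_cons, ih (isNormal_enc_of_isNormal_enc_append (u := [a]) h), step, enc]
    rw [enc] at h
    split_ifs at h ⊢
    · rfl
    · rw [push_of_isNormal_cons h]

/-- Every integer index is that of a conjugate `x_0^n x_c x_0^{-n}` with `1 ≤ c ≤ q`. -/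
theorem exists_eq_natCast_sub_mul [NeZero q] (j : ℤ) :
    ∃ (c : ℕ) (n : ℤ), 1 ≤ c ∧ c ≤ q ∧ j = c - n * q := by
  have hq : (0 : ℤ) < q := mod_cast NeZero.pos q
  have hnonneg := Int.emod_nonneg (j - 1) hq.ne'
  have hlt := Int.emod_lt_of_pos (j - 1) hq
  have hdiv := Int.emod_add_ediv_mul (j - 1) q
  refine ⟨((j - 1) % q + 1).toNat, -((j - 1) / q), by omega, by omega, ?_⟩
  rw [Int.toNat_of_nonneg (by omega)]
  linarith

theorem exists_enc_eq_translate (n : ℤ) {w : List (ℕ × Bool)} (hw : ∀ a ∈ w, a.1 ≤ q) :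
    ∃ v : List (ℕ × Bool), (∀ a ∈ v, a.1 ≤ q) ∧ enc q v = translate q n (enc q w) := by
  refine ⟨List.replicate n.natAbs (0, decide (0 ≤ n)) ++ w, ?_, ?_⟩
  · intro a ha
    rcases List.mem_append.1 ha with ha | ha
    · simp [List.eq_of_mem_replicate ha]
    · exact hw a ha
  · have hn : signed (decide (0 ≤ n)) n.natAbs = n := by
      by_cases hn : 0 ≤ n
      · rw [decide_eq_true hn, signed_true, Int.natAbs_of_nonneg hn]
      · rw [decide_eq_false hn, signed_false, Int.ofNat_natAbs_of_nonpos (by omega), neg_neg]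
    rw [enc_replicate_append, hn]

theorem exists_enc_eq [NeZero q] (y : Code) :
    ∃ w : List (ℕ × Bool), (∀ a ∈ w, a.1 ≤ q) ∧ enc q w = y := by
  obtain ⟨z, s⟩ := y
  induction z generalizing s with
  | nil =>
    obtain ⟨w, hw, h⟩ := exists_enc_eq_translate (q := q) s (w := []) (by simp)
    exact ⟨w, hw, h.trans (by simp [enc, translate])⟩
  | cons a z ih =>
    obtain ⟨j, e⟩ := a
    obtain ⟨c, n, hc, hcq, rfl⟩ := exists_eq_natCast_sub_mul (q := q) j
    obtain ⟨u, hu, henc_u⟩ := ih s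
    obtain ⟨v, hv, henc_v⟩ := exists_enc_eq_translate (-n) hu
    have hcv : ∀ a ∈ (c, e) :: v, a.1 ≤ q := List.forall_mem_cons.2 ⟨hcq, hv⟩
    obtain ⟨w, hw, henc_w⟩ := exists_enc_eq_translate n hcv
    refine ⟨w, hw, ?_⟩
    calc enc q w = translate q n (((c : ℤ), e) :: (enc q v).1, (enc q v).2) := by
          rw [henc_w, enc_cons (by omega)]
      _ = (((c : ℤ) - n * q, e) :: (translate q n (enc q v)).1, (translate q n (enc q v)).2) := rfl
      _ = (((c : ℤ) - n * q, e) :: z, s) := by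
          rw [henc_v, henc_u, translate_translate, add_neg_cancel, translate_zero]

end Encoding

section Value

variable {G : Type*} [Group G] (f : ℕ → G) {q : ℕ}

/-- The element `X_j = x_0^n x_c x_0^{-n}`, where `j = c - nq` with `1 ≤ c ≤ q`, of a group with
distinguished elements `x_i = f i`. -/
def conjGen (q : ℕ) (j : ℤ) : G :=
  f 0 ^ (-((j - 1) / q)) * f ((j - 1) % q + 1).toNat * f 0 ^ ((j - 1) / q)

/-- The element that a code stands for in a group with distinguished elements `x_i = f i`. -/
def value (q : ℕ) (y : Code) : G :=
  FreeGroup.lift (conjGen f q) (FreeGroup.mk y.1) * f 0 ^ y.2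

theorem lift_mk_singleton {α : Type*} (g : α → G) (a : α × Bool) :
    FreeGroup.lift g (FreeGroup.mk [a]) = g a.1 ^ signed a.2 1 := by
  obtain ⟨i, e⟩ := a
  cases e <;> simp [FreeGroup.lift_mk]

theorem lift_mk_cons {α : Type*} (g : α → G) (a : α × Bool) (w : List (α × Bool)) :
    FreeGroup.lift g (FreeGroup.mk (a :: w)) =
      g a.1 ^ signed a.2 1 * FreeGroup.lift g (FreeGroup.mk w) := by
  rw [← lift_mk_singleton, ← map_mul, FreeGroup.mul_mk, List.singleton_append]

theorem conjGen_natCast_sub_mul {c : ℕ} (hc : 1 ≤ c) (hcq : c ≤ q) (n : ℤ) :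
    conjGen f q (c - n * q) = MulAut.conj (f 0 ^ n) (f c) := by
  have hsub : (c : ℤ) - n * q - 1 = (c - 1) + (-n) * q := by ring
  have hdiv : ((c : ℤ) - n * q - 1) / q = -n := by
    rw [hsub, Int.add_mul_ediv_right _ _ (by omega), Int.ediv_eq_zero_of_lt (by omega) (by omega),
      zero_add]
  have hmod : ((c : ℤ) - n * q - 1) % q = c - 1 := by
    rw [hsub, Int.add_mul_emod_self_right, Int.emod_eq_of_lt (by omega) (by omega)]
  rw [conjGen, hdiv, hmod, sub_add_cancel, Int.toNat_natCast, neg_neg, zpow_neg, MulAut.conj_apply]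

theorem conjGen_natCast_of_le {c : ℕ} (hc : 1 ≤ c) (hcq : c ≤ q) : conjGen f q c = f c := by
  simpa using conjGen_natCast_sub_mul f hc hcq 0

theorem conjGen_sub_mul [NeZero q] (j n : ℤ) :
    conjGen f q (j - n * q) = MulAut.conj (f 0 ^ n) (conjGen f q j) := by
  obtain ⟨c, m, hc, hcq, rfl⟩ := exists_eq_natCast_sub_mul (q := q) j
  have hsub : (c : ℤ) - m * q - n * q = c - (n + m) * q := by ring
  rw [hsub, conjGen_natCast_sub_mul f hc hcq, conjGen_natCast_sub_mul f hc hcq, zpow_add, map_mul,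
    MulAut.mul_apply]

theorem value_cons (a : Letter) (z : List Letter) (s : ℤ) :
    value f q (a :: z, s) = conjGen f q a.1 ^ signed a.2 1 * value f q (z, s) := by
  simp only [value, lift_mk_cons, mul_assoc]

theorem value_translate [NeZero q] (n : ℤ) (y : Code) :
    value f q (translate q n y) = f 0 ^ n * value f q y := by
  have hconj : (FreeGroup.lift (conjGen f q)).comp (FreeGroup.map (· - n * q)) =
      (MulAut.conj (f 0 ^ n)).toMonoidHom.comp (FreeGroup.lift (conjGen f q)) :=
    FreeGroup.ext_hom _ _ fun j => by simpa using conjGen_sub_mul f j n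
  have hmk : FreeGroup.lift (conjGen f q) (FreeGroup.mk (translate q n y).1) =
      f 0 ^ n * FreeGroup.lift (conjGen f q) (FreeGroup.mk y.1) * (f 0 ^ n)⁻¹ :=
    DFunLike.congr_fun hconj (FreeGroup.mk y.1)
  rw [value, value, hmk, translate, add_comm, zpow_add]
  group

theorem value_enc [NeZero q] {w : List (ℕ × Bool)} (hw : ∀ a ∈ w, a.1 ≤ q) :
    value f q (enc q w) = FreeGroup.lift f (FreeGroup.mk w) := by
  induction w with
  | nil => simp [value, enc, ← FreeGroup.one_eq_mk]
  | cons a w ih =>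
    obtain ⟨i, e⟩ := a
    obtain ⟨hi, hw⟩ := List.forall_mem_cons.1 hw
    rw [lift_mk_cons, ← ih hw]
    by_cases h0 : i = 0
    · rw [h0, enc_zero_cons, value_translate]
    · rw [enc_cons h0, value_cons, conjGen_natCast_of_le f (by omega) hi]

section Relations

variable {f} (hf : ∀ ⦃i j : ℕ⦄, i < j → f j * f i = f i * f (j + q))

include hf

theorem conjGen_natCast [NeZero q] {j : ℕ} (hj : 1 ≤ j) : conjGen f q j = f j := by
  have := NeZero.pos q
  induction j using Nat.strong_induction_on with
  | _ j ih =>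
    rcases le_or_gt j q with hjq | hjq
    · exact conjGen_natCast_of_le f hj hjq
    · obtain ⟨k, rfl⟩ := Nat.exists_eq_add_of_le' hjq.le
      have hk : 0 < k := by omega
      have hcast : ((k + q : ℕ) : ℤ) = k - (-1) * q := by push_cast; ring
      rw [hcast, conjGen_sub_mul, ih k (by omega) hk, MulAut.conj_apply, zpow_neg_one, inv_inv,
        mul_assoc, hf hk, inv_mul_cancel_left]

theorem semiconjBy_conjGen [NeZero q] {i j : ℤ} (hij : i < j) :
    SemiconjBy (conjGen f q i) (conjGen f q (j + q)) (conjGen f q j) := by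
  obtain ⟨n, hn⟩ : ∃ n : ℤ, 1 ≤ i + n * q := by
    have hq : (1 : ℤ) ≤ q := mod_cast NeZero.pos q
    exact ⟨|i| + 1, by nlinarith [neg_abs_le i, abs_nonneg i]⟩
  obtain ⟨i', hi'⟩ := Int.eq_ofNat_of_zero_le (by omega : 0 ≤ i + n * q)
  obtain ⟨j', hj'⟩ := Int.eq_ofNat_of_zero_le (by omega : 0 ≤ j + n * q)
  have hrel : SemiconjBy (conjGen f q i') (conjGen f q (j' + q : ℕ)) (conjGen f q j') := by
    rw [conjGen_natCast hf (by omega), conjGen_natCast hf (by omega),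
      conjGen_natCast hf (by omega)]
    exact (hf (by omega)).symm
  have hi : i = i' - n * q := by omega
  have hj : j = j' - n * q := by omega
  have hjq : j + q = ((j' + q : ℕ) : ℤ) - n * q := by omega
  rw [hjq, hi, hj, conjGen_sub_mul, conjGen_sub_mul, conjGen_sub_mul]
  exact hrel.map (MulAut.conj (f 0 ^ n))

theorem Passes.semiconjBy [NeZero q] {a b : Letter} (h : Passes q a b) :
    SemiconjBy (conjGen f q b.1 ^ signed b.2 1) (conjGen f q (slide q b a).1 ^ signed a.2 1)
      (conjGen f q a.1 ^ signed a.2 1) := by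
  refine SemiconjBy.zpow_right ?_ _
  obtain ⟨i, d⟩ := b
  cases d
  · have hrel := semiconjBy_conjGen hf h.2
    simpa [slide] using hrel.inv_symm_left
  · simpa [slide] using semiconjBy_conjGen hf h.1

theorem value_push [NeZero q] (a : Letter) (z : List Letter) (s : ℤ) :
    value f q (push q a z, s) = conjGen f q a.1 ^ signed a.2 1 * value f q (z, s) := by
  induction z generalizing a with
  | nil => rw [push, value_cons]
  | cons b z ih =>
    rw [push]
    split_ifs with hb hab
    · obtain ⟨j, e⟩ := a
      subst hb
      rw [value_cons, ← mul_assoc]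
      cases e <;> simp
    · rw [value_cons, ih, value_cons, ← mul_assoc, ← mul_assoc]
      exact congrArg (· * value f q (z, s)) (hab.semiconjBy hf).eq
    · rw [value_cons]

theorem value_foldr_step [NeZero q] (w : List (ℕ × Bool)) (y : Code) :
    value f q (w.foldr (step q) y) = FreeGroup.lift f (FreeGroup.mk w) * value f q y := by
  induction w with
  | nil => simp [← FreeGroup.one_eq_mk]
  | cons a w ih =>
    obtain ⟨i, e⟩ := a
    rw [List.foldr_cons, lift_mk_cons, mul_assoc, ← ih, step]
    split_ifs with hi
    · rw [value_translate, show i = 0 from hi]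
    · rw [value_push hf, conjGen_natCast hf (Nat.one_le_iff_ne_zero.2 hi)]

end Relations

theorem xgen_mul_xgen {i j : ℕ} (hij : i < j) :
    xgen (q + 1) j * xgen (q + 1) i = xgen (q + 1) i * xgen (q + 1) (j + q) := by
  have hrel : xgen (q + 1) j * xgen (q + 1) i * (xgen (q + 1) (j + q))⁻¹ * (xgen (q + 1) i)⁻¹ = 1 :=
    PresentedGroup.one_of_mem (rels := ThompsonRels (q + 1)) ⟨i, j, hij, rfl⟩
  rwa [mul_inv_eq_one, mul_inv_eq_iff_eq_mul] at hrel

end Value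

section NFin

variable {q : ℕ}

theorem passes_natCast_iff {a b m : ℕ} {e d : Bool} (ha : 1 ≤ a) (haq : a ≤ q) (hb : 1 ≤ b)
    (hbq : b ≤ q) : Passes q (a, e) (b - m * q, d) ↔
      bif d then 1 ≤ m ∨ b < a else 2 ≤ m ∨ (m = 1 ∧ b < a) := by
  rcases (by omega : m = 0 ∨ m = 1 ∨ 2 ≤ m) with rfl | rfl | hm
  · grind [Passes, slide, signed]
  · grind [Passes, slide, signed]
  · have : 2 * (q : ℤ) ≤ m * q := by gcongr; exact_mod_cast hm
    grind [Passes, slide, signed]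

/-- The families (2)-(5) are exactly the words `x_a^{±1} x_0^m x_b^{±1}` in which the first letter
can be moved past the last one. -/
theorem forbidden_iff {u : List (ℕ × Bool)} : Forbidden (q + 1) u ↔
    (∃ (i : ℕ) (e : Bool), i ≤ q ∧ u = [(i, e), (i, !e)]) ∨
    ∃ (a b m : ℕ) (e d : Bool), (1 ≤ a ∧ a ≤ q) ∧ (1 ≤ b ∧ b ≤ q) ∧
      Passes q (a, e) (b - m * q, d) ∧
      u = (a, e) :: (List.replicate m (0, true) ++ [(b, d)]) := by
  refine or_congr Iff.rfl ⟨?_, ?_⟩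
  · rintro (⟨a, b, k, e, hb, hab, ha, rfl⟩ | ⟨a, b, k, e, hb, hab, ha, rfl⟩ |
      ⟨a, b, k, e, ha, hab, hb, rfl⟩ | ⟨a, b, k, e, ha, hab, hb, rfl⟩)
    all_goals
      refine ⟨a, b, _, e, _, by omega, by omega, ?_, rfl⟩
      rw [passes_natCast_iff (by omega) (by omega) (by omega) (by omega)]
      simp only [cond_true, cond_false]
      omega
  · rintro ⟨a, b, m, e, d, ⟨ha, haq⟩, ⟨hb, hbq⟩, hpass, rfl⟩
    rw [passes_natCast_iff ha haq hb hbq] at hpass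
    rcases lt_or_ge b a with hab | hab
    · cases d
      · obtain ⟨k, rfl⟩ : ∃ k, m = k + 1 := Nat.exists_eq_succ_of_ne_zero (by grind)
        exact Or.inr (Or.inl ⟨a, b, k, e, hb, hab, haq, rfl⟩)
      · exact Or.inl ⟨a, b, m, e, hb, hab, haq, rfl⟩
    · cases d
      · obtain ⟨k, rfl⟩ : ∃ k, m = k + 2 := Nat.exists_eq_add_of_le' (by grind)
        exact Or.inr (Or.inr (Or.inr ⟨a, b, k, e, ha, hab, hbq, rfl⟩))
      · obtain ⟨k, rfl⟩ : ∃ k, m = k + 1 := Nat.exists_eq_succ_of_ne_zero (by grind)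
        exact Or.inr (Or.inr (Or.inl ⟨a, b, k, e, ha, hab, hbq, rfl⟩))

theorem _root_.NFin.isReduced {w : List (ℕ × Bool)} (hw : NFin (q + 1) w) :
    FreeGroup.IsReduced w := by
  refine FreeGroup.IsReduced.of_forall_not_step fun v hstep => ?_
  obtain @⟨s, t, i, e⟩ := hstep
  exact hw.2 [(i, e), (i, !e)] ⟨s, t, by simp⟩ (Or.inl ⟨i, e, hw.1 (i, e) (by simp), rfl⟩)

theorem _root_.NFin.tail {a : ℕ × Bool} {w : List (ℕ × Bool)} (hw : NFin (q + 1) (a :: w)) :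
    NFin (q + 1) w :=
  ⟨fun b hb => hw.1 b (List.mem_cons_of_mem _ hb),
    fun u hu => hw.2 u (hu.trans (List.suffix_cons a w).isInfix)⟩

theorem exists_eq_replicate_append_of_isReduced {w : List (ℕ × Bool)}
    (hw : FreeGroup.IsReduced w) : ∃ (m : ℕ) (f : Bool) (t : List (ℕ × Bool)),
      w = List.replicate m (0, f) ++ t ∧ ∀ a ∈ t.head?, a.1 ≠ 0 := by
  induction w with
  | nil => exact ⟨0, true, [], rfl, by simp⟩
  | cons a w ih =>
    obtain ⟨i, e⟩ := a
    by_cases hi : i = 0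
    · subst hi
      obtain ⟨m, f, t, rfl, ht⟩ := ih hw.tail
      cases m with
      | zero => exact ⟨1, e, t, rfl, ht⟩
      | succ m =>
        have hef : e = f := (List.isChain_cons_cons.1 hw).1 rfl
        exact ⟨m + 2, f, t, by rw [hef]; rfl, ht⟩
    · exact ⟨0, true, (i, e) :: w, rfl, by simpa using hi⟩

/-- Only a positive power of `x_0` between two letters allows the first one to move or cancel, as
`x_0^{-m}` raises the index of the second one to at least `q + 1`. -/
theorem stuck_natCast_of_nFin {a c m : ℕ} {e d f : Bool} {t : List (ℕ × Bool)}
    (ha : a ≠ 0) (hc : c ≠ 0)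
    (hw : NFin (q + 1) ((a, e) :: (List.replicate m (0, f) ++ (c, d) :: t))) :
    Stuck q (a, e) (c - signed f m * q, d) := by
  have haq : a ≤ q := hw.1 (a, e) (by simp)
  have hcq : c ≤ q := hw.1 (c, d) (by simp)
  have hmq (hm : m ≠ 0) : (q : ℤ) ≤ m * q :=
    le_mul_of_one_le_left (Nat.cast_nonneg q) (by omega)
  constructor
  · intro hpass
    have hmf : m = 0 ∨ f = true := by
      by_contra! h
      have := hmq h.1
      have hlt := hpass.1
      simp only [Bool.eq_false_of_not_eq_true h.2, signed_false] at hlt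
      lia
    have hinfix : (a, e) :: (List.replicate m (0, true) ++ [(c, d)]) <:+:
        (a, e) :: (List.replicate m (0, f) ++ (c, d) :: t) :=
      ⟨[], t, by rcases hmf with rfl | rfl <;> simp⟩
    have hpass' : Passes q (a, e) (c - m * q, d) := by
      rcases hmf with rfl | rfl
      · cases f <;> simpa using hpass
      · exact hpass
    exact hw.2 _ hinfix
      (forbidden_iff.2 (Or.inr ⟨a, c, m, e, d, by omega, by omega, hpass', rfl⟩))
  · intro hinv
    obtain ⟨hca, hde⟩ := Prod.ext_iff.1 hinv
    obtain rfl : m = 0 := by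
      by_contra hm
      have := hmq hm
      cases f <;> simp only [signed_true, signed_false] at hca <;> lia
    obtain rfl : c = a := by cases f <;> simpa using hca
    obtain rfl : d = !e := hde
    exact hw.2 [(c, e), (c, !e)] ⟨[], t, by simp⟩ (Or.inl ⟨c, e, haq, rfl⟩)

theorem _root_.NFin.isNormal_enc {w : List (ℕ × Bool)} (hw : NFin (q + 1) w) :
    IsNormal q (enc q w).1 := by
  induction w with
  | nil => exact List.isChain_nil
  | cons a w ih =>
    obtain ⟨i, e⟩ := a
    by_cases hi : i = 0
    · rw [hi, enc_zero_cons, isNormal_translate_iff]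
      exact ih hw.tail
    rw [enc_cons hi, IsNormal, List.isChain_cons]
    refine ⟨fun b hb => ?_, ih hw.tail⟩
    obtain ⟨m, f, t, rfl, ht⟩ := exists_eq_replicate_append_of_isReduced hw.isReduced.tail
    rw [enc_replicate_append] at hb
    cases t with
    | nil => simp [enc, translate] at hb
    | cons c t =>
      obtain ⟨c, d⟩ := c
      have hc : c ≠ 0 := ht (c, d) rfl
      rw [enc_cons hc] at hb
      obtain rfl : ((c : ℤ) - signed f m * q, d) = b := by simpa [translate] using hb
      exact stuck_natCast_of_nFin hi hc hw

theorem nFin_of_isNormal_enc {w : List (ℕ × Bool)} (hw : ∀ a ∈ w, a.1 ≤ q)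
    (hred : FreeGroup.IsReduced w) (hnorm : IsNormal q (enc q w).1) : NFin (q + 1) w := by
  refine ⟨hw, ?_⟩
  rintro u ⟨s, t, rfl⟩ hu
  rw [List.append_assoc] at hred hnorm
  have hnorm := isNormal_enc_of_isNormal_enc_append hnorm
  rcases forbidden_iff.1 hu with ⟨i, e, -, rfl⟩ | ⟨a, b, m, e, d, ⟨ha, -⟩, ⟨hb, -⟩, hpass, rfl⟩
  · exact hred.not_step FreeGroup.Red.Step.not
  · rw [List.cons_append, List.append_assoc, List.singleton_append, enc_cons (by omega),
      enc_replicate_append, enc_cons (by omega)] at hnorm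
    exact (List.isChain_cons_cons.1 hnorm).1.1 hpass

theorem enc_eq_of_step {w v : List (ℕ × Bool)} (hstep : FreeGroup.Red.Step w v)
    (hw : IsNormal q (enc q w).1) : enc q v = enc q w := by
  obtain @⟨s, t, i, e⟩ := hstep
  induction s with
  | nil =>
    rcases eq_or_ne i 0 with rfl | hi
    · simp only [List.nil_append, enc_zero_cons, translate_translate]
      cases e <;> simp [translate_zero]
    · rw [List.nil_append, enc_cons hi, enc_cons hi] at hw
      exact absurd rfl (List.isChain_cons_cons.1 hw).1.2
  | cons a s ih =>
    have h := ih (isNormal_enc_of_isNormal_enc_append (u := [a]) hw)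
    simp only [List.cons_append, enc, h]

theorem enc_eq_of_red {w v : List (ℕ × Bool)} (hred : FreeGroup.Red w v)
    (hw : IsNormal q (enc q w).1) : enc q v = enc q w := by
  induction hred with
  | refl => rfl
  | tail _ hstep ih => exact (enc_eq_of_step hstep (ih ▸ hw)).trans ih

theorem exists_nFin_enc_eq [NeZero q] (y : NormalCode q) :
    ∃ w, NFin (q + 1) w ∧ enc q w = y.1 := by
  obtain ⟨w, hw, henc⟩ := exists_enc_eq (q := q) y.1
  have hred : FreeGroup.Red w (FreeGroup.reduce w) := FreeGroup.reduce.red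
  have henc_reduce : enc q (FreeGroup.reduce w) = y.1 :=
    (enc_eq_of_red hred (henc ▸ y.2)).trans henc
  refine ⟨FreeGroup.reduce w, nFin_of_isNormal_enc (fun a ha => hw a (hred.sublist.subset ha)) ?_
    (henc_reduce ▸ y.2), henc_reduce⟩
  exact FreeGroup.isReduced_iff_reduce_eq.2 FreeGroup.reduce.idem

theorem injOn_enc [NeZero q] : Set.InjOn (enc q) {w | NFin (q + 1) w} := by
  intro w hw v hv h
  have hvalue := congrArg (value FreeGroup.of q) h
  simp only [value_enc (q := q) _ hw.1, value_enc (q := q) _ hv.1, FreeGroup.lift_of_apply]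
    at hvalue
  rw [← hw.isReduced.reduce_eq, ← hv.isReduced.reduce_eq]
  exact FreeGroup.reduce.sound hvalue

/-- The code of the empty word. -/
def emptyCode (q : ℕ) : NormalCode q := ⟨([], 0), List.isChain_nil⟩

theorem rep_evalWord_emptyCode [NeZero q] {w : List (ℕ × Bool)} (hw : NFin (q + 1) w) :
    (rep q (evalWord (q + 1) w) (emptyCode q)).1 = enc q w :=
  (rep_evalWord_apply w _).trans (foldr_step_eq_enc hw.isNormal_enc)

theorem value_rep_emptyCode [NeZero q] (g : FP (q + 1)) :
    value (xgen (q + 1)) q (rep q g (emptyCode q)).1 = g := by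
  obtain ⟨w, rfl⟩ := evalWord_surjective _ g
  rw [rep_evalWord_apply, value_foldr_step fun _ _ => xgen_mul_xgen, ← evalWord_eq_lift]
  simp [value, emptyCode, ← FreeGroup.one_eq_mk]

end NFin

end GeneralizedThompson

/-- Every element of `F(p)` is represented by exactly one word with no
forbidden subword: the evaluation map is a bijection from `N_fin(p)` onto
`F(p)`. -/
theorem stmt6 (p : ℕ) (hp : 2 ≤ p) :
    Set.BijOn (evalWord p) {w | NFin p w} (Set.univ : Set (FP p)) := by
  obtain ⟨q, rfl⟩ : ∃ q, p = q + 1 := Nat.exists_eq_succ_of_ne_zero (by omega)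
  have : NeZero q := ⟨by omega⟩
  refine ⟨Set.mapsTo_univ _ _, fun w hw v hv heval => ?_, fun g _ => ?_⟩
  · apply GeneralizedThompson.injOn_enc hw hv
    rw [← GeneralizedThompson.rep_evalWord_emptyCode hw, heval,
      GeneralizedThompson.rep_evalWord_emptyCode hv]
  · obtain ⟨w, hw, henc⟩ := GeneralizedThompson.exists_nFin_enc_eq
      (GeneralizedThompson.rep q g (GeneralizedThompson.emptyCode q))
    refine ⟨w, hw, ?_⟩
    rw [← GeneralizedThompson.value_rep_emptyCode g, ← henc,
      GeneralizedThompson.value_enc (q := q) _ hw.1, GeneralizedThompson.evalWord_eq_lift]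
end
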